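/- Let N = 2n+2 and let T ⪯ P be type D Schubert symbols with t(T) ≠ t(P), and fix c ∈ [1,n] with [c+1,n+1] ⊆ [T] ∩ [P]. Set ℓ = n+1−c, α = #(P ∩ [1,c]), and define the Schubert symbols P^{(c)} = {p − c : p ∈ P ∩ [c+1, N−c]} and T^{(c)} = {t − c : t ∈ T ∩ [c+1, N−c]} for OG(ℓ, 2ℓ). Then t(P) + t(T) ≡ t(P^{(c)}) + t(T^{(c)}) + 1 (mod 2), where for the window we use #(T ∩ [1,c]) = α + 1 (the exceptional-cut condition). -/

import Mathlib

open scoped Classical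

/-- `p : ℕ → ℕ` encodes a Schubert symbol `{p 1 < … < p m} ⊆ [1,N]`
with the conventions `p 0 = 0` and `p (m+1) = N+1`, and the isotropic
condition that no two elements sum to `N+1`. -/
structure IsSSym (N m : ℕ) (p : ℕ → ℕ) : Prop where
  zero : p 0 = 0
  top : p (m+1) = N+1
  mono : ∀ i j, i < j → j ≤ m+1 → p i < p j
  ub : ∀ i, 1 ≤ i → i ≤ m → p i ≤ N
  iso : ∀ i j, 1 ≤ i → i ≤ m → 1 ≤ j → j ≤ m → p i + p j ≠ N+1

/-- The underlying set `{p 1, …, p m}` of a Schubert symbol. -/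
def symSet (m : ℕ) (p : ℕ → ℕ) : Finset ℕ := (Finset.Icc 1 m).image p

/-- Componentwise order `t_i ≤ p_i` on Schubert symbols. -/
def leS (m : ℕ) (t p : ℕ → ℕ) : Prop := ∀ i, 1 ≤ i → i ≤ m → t i ≤ p i

/-- `c` is a visible cut of the Richardson diagram `D(P,T)`:
`p_i ≤ c < t_{i+1}` for some `0 ≤ i ≤ m`. -/
def visCut (m : ℕ) (p t : ℕ → ℕ) (c : ℕ) : Prop :=
  ∃ i, i ≤ m ∧ p i ≤ c ∧ c < t (i+1)

/-- `c` is an apparent cut of `D(P,T)`: `c` or `N−c` is a visible cut. -/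
def appCut (N m : ℕ) (p t : ℕ → ℕ) (c : ℕ) : Prop :=
  visCut m p t c ∨ visCut m p t (N - c)

/-- `c` is a zero column of `D(P,T)`: `p_j < c < t_{j+1}` for some `j`. -/
def zeroCol (m : ℕ) (p t : ℕ → ℕ) (c : ℕ) : Prop :=
  ∃ j, j ≤ m ∧ p j < c ∧ c < t (j+1)

/-- `(j,c)` is a lone star of `D(P,T)` with respect to the cut predicate `cut`. -/
def loneStar (m : ℕ) (p t : ℕ → ℕ) (cut : ℕ → Prop) (j c : ℕ) : Prop :=
  1 ≤ j ∧ j ≤ m ∧ t j ≤ c ∧ c ≤ p j ∧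
    ((c = t j ∧ cut c) ∨ (c = p j ∧ cut (c-1)))

/-- `c ∈ 𝓛_{P,T}` : `c` is a zero column, or column `N+1−c` contains a lone star. -/
def LSet (N m : ℕ) (p t : ℕ → ℕ) (cut : ℕ → Prop) (c : ℕ) : Prop :=
  1 ≤ c ∧ c ≤ N ∧
    (zeroCol m p t c ∨ ∃ j, loneStar m p t cut j (N+1-c))

/-- `[P] = P ∪ {N+1−p : p ∈ P}`. -/
def brP (N : ℕ) (P : Finset ℕ) : Finset ℕ := P ∪ P.image (fun p => N+1-p)

/-- The type-`D` type function `t(P) ∈ {0,1,2}`: if `n+1 ∈ [P]` it is the parity of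
`#([1,n+1] \ P)`; otherwise it is `2`. -/
def tD (n : ℕ) (P : Finset ℕ) : ℕ :=
  if (n+1) ∈ P ∨ (n+2) ∈ P then (Finset.Icc 1 (n+1) \ P).card % 2 else 2

/-- The type-`D` Bruhat order `T ⪯ P` on Schubert symbols for `OG(m, 2n+2)`. -/
def bruhatD (n m : ℕ) (t p : ℕ → ℕ) : Prop :=
  leS m t p ∧ ∀ c, 1 ≤ c → c ≤ n →
    Finset.Icc (c+1) (n+1) ⊆ brP (2*n+2) (symSet m p) →
    Finset.Icc (c+1) (n+1) ⊆ brP (2*n+2) (symSet m t) →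
    ((symSet m p) ∩ Finset.Icc 1 c).card = ((symSet m t) ∩ Finset.Icc 1 c).card →
    tD n (symSet m p) = tD n (symSet m t)

/-- The exceptional center cut `n+1` exists in `D(P,T)`:
`p_i = n+2 ≤ t_{i+1}` or `t_i = n+1 ≥ p_{i−1}` for some `i`. -/
def centerCut (n m : ℕ) (p t : ℕ → ℕ) : Prop :=
  ∃ i, 1 ≤ i ∧ i ≤ m ∧
    ((p i = n+2 ∧ n+2 ≤ t (i+1)) ∨ (t i = n+1 ∧ p (i-1) ≤ n+1))

/-- `c ∈ [1,n]` is a cut candidate of `D(P,T)`: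
`[c+1,n+1] ⊆ [P] ∩ [T]` and `#(T ∩ [1,c]) = #(P ∩ [1,c]) + 1`. -/
def cutCandidate (n m : ℕ) (p t : ℕ → ℕ) (c : ℕ) : Prop :=
  1 ≤ c ∧ c ≤ n ∧
  Finset.Icc (c+1) (n+1) ⊆ brP (2*n+2) (symSet m p) ∧
  Finset.Icc (c+1) (n+1) ⊆ brP (2*n+2) (symSet m t) ∧
  ((symSet m t) ∩ Finset.Icc 1 c).card = ((symSet m p) ∩ Finset.Icc 1 c).card + 1

/-- Exceptional cuts of `D(P,T)` in type `D`. -/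
def excCut (n m : ℕ) (p t : ℕ → ℕ) (c : ℕ) : Prop :=
  (centerCut n m p t ∧ c = n+1) ∨
  (tD n (symSet m t) ≠ tD n (symSet m p) ∧
    ∃ d, cutCandidate n m p t d ∧ (c = d ∨ c = 2*n+2 - d))

/-- The type-`D` cut set: apparent cuts together with exceptional cuts. -/
def cutD (n m : ℕ) (p t : ℕ → ℕ) (c : ℕ) : Prop :=
  appCut (2*n+2) m p t c ∨ excCut n m p t c

/-- The construction of the Schubert symbol `P'` from `T ⪯ P` in types `B` and `C`. -/
noncomputable def Pp (N m : ℕ) (p t : ℕ → ℕ) (i : ℕ) : ℕ :=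
  if p i < t (i+1) then p i
  else if ¬ appCut N m p t (t (i+1) - 1) then t (i+1)
  else ((Finset.Icc (t i) (t (i+1) - 1)).filter
        (fun c => ¬ LSet N m p t (appCut N m p t) c)).sup id

/-- The modified construction of the Schubert symbol `P̃` from `T ⪯ P` in type `D`. -/
noncomputable def Ptil (n m : ℕ) (p t : ℕ → ℕ) (i : ℕ) : ℕ :=
  if p i < t (i+1) then p i
  else if ¬ cutD n m p t (t (i+1) - 1) then
    (if t (i+1) = n+1 ∨ t (i+1) = n+2 then 2*n+3 - t (i+1) else t (i+1))
  else ((Finset.Icc (t i) (t (i+1) - 1)).filter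
        (fun c => ¬ LSet (2*n+2) m p t (cutD n m p t) c)).sup id

/-- A critical window `[c+1, N−c]` in `D(P,T)` (type `D`, defined when `t(T) ≠ t(P)`):
`c` and `N−c` are visible cuts and `[c+1,n+1] ⊆ [T] ∩ [P]`. -/
def critWindow (n m : ℕ) (p t : ℕ → ℕ) (c : ℕ) : Prop :=
  c ≤ n ∧ tD n (symSet m t) ≠ tD n (symSet m p) ∧
  visCut m p t c ∧ visCut m p t (2*n+2 - c) ∧
  Finset.Icc (c+1) (n+1) ⊆ brP (2*n+2) (symSet m t) ∧
  Finset.Icc (c+1) (n+1) ⊆ brP (2*n+2) (symSet m p)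

/-- The quadratic form `f_c = x_1 x_N + … + x_c x_{N+1−c}`. -/
noncomputable def fquad (N : ℕ) (c : ℕ) (x : ℕ → ℂ) : ℂ := ∑ i ∈ Finset.Icc 1 c, x i * x (N+1-i)

/-- The variety `Z_{P,T}` (affine cone) cut out by quadratic equations `f_c = 0`
for `c` in a prescribed set `Q` and linear equations `x_c = 0` for `c ∈ 𝓛_{P,T}`. -/
def Zvar (N m : ℕ) (p t : ℕ → ℕ) (Q : ℕ → Prop) (cut : ℕ → Prop) : Set (ℕ → ℂ) :=
  {x | (∀ c, Q c → fquad N c x = 0) ∧ ∀ c, LSet N m p t cut c → x c = 0}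

/-- The windowed symbol `P^{(c)} = {x − c : x ∈ P ∩ [c+1, N−c]}`, for an arbitrary finite set `P`.
Every `x` in the window exceeds `c`, so the subtraction in `x - c` is never truncated. -/
def windowSymbol (N c : ℕ) (P : Finset ℕ) : Finset ℕ :=
  (P ∩ Finset.Icc (c + 1) (N - c)).image (fun x => x - c)

theorem mem_windowSymbol {N c x : ℕ} {P : Finset ℕ} :
    x ∈ windowSymbol N c P ↔ x + c ∈ P ∧ 1 ≤ x ∧ x + c ≤ N - c := by
  simp only [windowSymbol, Finset.mem_image, Finset.mem_inter, Finset.mem_Icc]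
  constructor
  · rintro ⟨y, ⟨hyP, hcy, hyN⟩, rfl⟩
    rw [Nat.sub_add_cancel (by omega)]
    exact ⟨hyP, by omega, hyN⟩
  · rintro ⟨hxP, hx, hxN⟩
    exact ⟨x + c, ⟨hxP, by omega, hxN⟩, Nat.add_sub_cancel x c⟩

theorem map_addRight_Icc_sdiff_windowSymbol {N c k : ℕ} (hck : c ≤ k) (hkN : k ≤ N - c)
    (P : Finset ℕ) :
    (Finset.Icc 1 (k - c) \ windowSymbol N c P).map (addRightEmbedding c) =
      Finset.Icc (c + 1) k \ P := by
  ext y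
  simp only [Finset.mem_map, addRightEmbedding_apply, Finset.mem_sdiff, Finset.mem_Icc,
    mem_windowSymbol]
  constructor
  · rintro ⟨x, ⟨hx, hxW⟩, rfl⟩
    exact ⟨by omega, fun hxP => hxW ⟨hxP, by omega, by omega⟩⟩
  · rintro ⟨hy, hyP⟩
    have hyc : y - c + c = y := by omega
    exact ⟨y - c, ⟨by omega, fun hyW => hyP (hyc ▸ hyW.1)⟩, hyc⟩

theorem card_Icc_sdiff_windowSymbol {N c k : ℕ} (hck : c ≤ k) (hkN : k ≤ N - c)
    (P : Finset ℕ) :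
    (Finset.Icc 1 (k - c) \ windowSymbol N c P).card = (Finset.Icc (c + 1) k \ P).card := by
  rw [← map_addRight_Icc_sdiff_windowSymbol hck hkN P, Finset.card_map]

theorem card_Icc_one_sdiff_eq_add {c k : ℕ} (hck : c ≤ k) (P : Finset ℕ) :
    (Finset.Icc 1 k \ P).card = (Finset.Icc 1 c \ P).card + (Finset.Icc (c + 1) k \ P).card := by
  have hunion : Finset.Icc 1 k = Finset.Icc 1 c ∪ Finset.Icc (c + 1) k := by
    ext x
    simp only [Finset.mem_union, Finset.mem_Icc]
    omega
  have hdisj : Disjoint (Finset.Icc 1 c) (Finset.Icc (c + 1) k) := by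
    simp only [Finset.disjoint_left, Finset.mem_Icc]
    omega
  rw [hunion, Finset.union_sdiff_distrib,
    Finset.card_union_of_disjoint (hdisj.mono Finset.sdiff_subset Finset.sdiff_subset)]

theorem card_Icc_one_sdiff_add_card_inter (c : ℕ) (P : Finset ℕ) :
    (Finset.Icc 1 c \ P).card + (P ∩ Finset.Icc 1 c).card = c := by
  rw [Finset.inter_comm, Finset.card_sdiff_add_card_inter, Nat.card_Icc, Nat.add_sub_cancel]

theorem card_Icc_sdiff_add_card_inter_eq_windowSymbol {N c k : ℕ} (hck : c ≤ k)
    (hkN : k ≤ N - c) (P : Finset ℕ) :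
    (Finset.Icc 1 k \ P).card + (P ∩ Finset.Icc 1 c).card =
      (Finset.Icc 1 (k - c) \ windowSymbol N c P).card + c := by
  rw [card_Icc_sdiff_windowSymbol hck hkN, card_Icc_one_sdiff_eq_add hck, add_right_comm,
    card_Icc_one_sdiff_add_card_inter, add_comm]

theorem stmt_19_general {N c k : ℕ} (hck : c ≤ k) (hkN : k ≤ N - c) {P T : Finset ℕ}
    (hexc : (T ∩ Finset.Icc 1 c).card = (P ∩ Finset.Icc 1 c).card + 1) :
    (Finset.Icc 1 k \ P).card + (Finset.Icc 1 k \ T).card ≡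
      (Finset.Icc 1 (k - c) \ windowSymbol N c P).card
        + (Finset.Icc 1 (k - c) \ windowSymbol N c T).card + 1 [MOD 2] := by
  have hP := card_Icc_sdiff_add_card_inter_eq_windowSymbol hck hkN P
  have hT := card_Icc_sdiff_add_card_inter_eq_windowSymbol hck hkN T
  -- With `α = #(P ∩ [1,c])`, `hP + hT` has the extra terms `2α + 1` (left) and `2c` (right).
  unfold Nat.ModEq
  omega

/-- (type D) Let `T ⪯ P` with `t(T) ≠ t(P)`, `c ∈ [1,n]` with
`[c+1,n+1] ⊆ [T] ∩ [P]` and `#(T ∩ [1,c]) = #(P ∩ [1,c]) + 1` (the exceptional-cut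
condition). With `ℓ = n+1−c` and `P^{(c)}, T^{(c)}` the windowed symbols for
`OG(ℓ,2ℓ)`, one has `t(P) + t(T) ≡ t(P^{(c)}) + t(T^{(c)}) + 1 (mod 2)`,
where types are the parities `#([1,n+1] \ ·)` resp. `#([1,ℓ] \ ·)`. -/
theorem stmt_19 (n m : ℕ) (p t : ℕ → ℕ)
    (hp : IsSSym (2*n+2) m p) (ht : IsSSym (2*n+2) m t)
    (hb : bruhatD n m t p)
    (htype : tD n (symSet m t) ≠ tD n (symSet m p))
    (c : ℕ) (hc1 : 1 ≤ c) (hcn : c ≤ n)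
    (hsub : Finset.Icc (c+1) (n+1) ⊆
      brP (2*n+2) (symSet m t) ∩ brP (2*n+2) (symSet m p))
    (hexc : (symSet m t ∩ Finset.Icc 1 c).card
      = (symSet m p ∩ Finset.Icc 1 c).card + 1) :
    ((Finset.Icc 1 (n+1) \ symSet m p).card
        + (Finset.Icc 1 (n+1) \ symSet m t).card) ≡
      ((Finset.Icc 1 (n+1-c) \
          ((symSet m p ∩ Finset.Icc (c+1) (2*n+2-c)).image (fun x => x - c))).card
        + (Finset.Icc 1 (n+1-c) \
          ((symSet m t ∩ Finset.Icc (c+1) (2*n+2-c)).image (fun x => x - c))).card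
        + 1) [MOD 2] := by
  exact stmt_19_general (by omega) (by omega) hexc
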